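/- Let 𝔭̄₀ = {X ∈ 𝔤₀ : X(Eu_{−1} ⊕ … ⊕ Eu_{−j}) ⊆ Eu_{−1} ⊕ … ⊕ Eu_{−j} for all 1 ≤ j ≤ r₀} (the parabolic subalgebra of 𝔤₀ opposite to the stabilizer of the isotropic flag Eu₁ ⊂ … ⊂ Eu₁ ⊕ … ⊕ Eu_{r₀}) and 𝔭_H = {X ∈ 𝔤₀ : X(w₀) = 0 and X(Eu'₁ ⊕ … ⊕ Eu'_j) ⊆ Eu'₁ ⊕ … ⊕ Eu'_j for all 1 ≤ j ≤ r₁} (a parabolic subalgebra of the unitary Lie algebra of the orthogonal complement of w₀). Then 𝔭̄₀ + 𝔭_H = 𝔤₀ as F-vector spaces. (Equivalently, the multiplication map P̄₀ × P_H → G₀ of the corresponding groups is submersive at the identity.) -/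

import Mathlib

/-!
Write `uₘ = wₘ - (-1)ᵐ wₘ₊₁`, so that `u₋ᵢ = u_{2i-2}` and `u'ᵢ = u_{2i-1}`. Let `𝔤ₖ` be the algebra
of skew-hermitian maps killing `w₀, …, wₖ₋₁`, and `𝔭ₖ ⊆ 𝔤ₖ` the stabilizer of the flag spanned by
`uₖ, uₖ₊₂, …`. Given `X ∈ 𝔤ₖ`, some `x ↦ ⟨p, x⟩ uₖ - ⟨uₖ, x⟩ p` with `p` in the span of `uₖ` and
`X wₖ` agrees with `X` at `wₖ` and lies in `𝔭ₖ`; hence `𝔤ₖ ⊆ 𝔭ₖ + 𝔤ₖ₊₁`. Since `𝔭ₖ₊₂ ⊆ 𝔭ₖ`,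
descending induction on `k` gives `𝔤ₖ ⊆ 𝔭ₖ + 𝔭ₖ₊₁`, and `k = 0` is the theorem.
-/

section Hermitian

variable {R V : Type*} [CommRing R] [AddCommGroup V] [Module R V] {σ : R →+* R}

/-- The skew-hermitian endomorphisms of a sesquilinear form, as an additive group. As in
`LinearMap.IsSymm`, forms are semilinear in the first variable. -/
def skewHermitian (B : V →ₛₗ[σ] V →ₗ[R] R) : AddSubgroup (Module.End R V) where
  carrier := {X | ∀ x y, B (X x) y + B x (X y) = 0}
  add_mem' hX hY x y := by
    simp only [LinearMap.add_apply, map_add]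
    linear_combination hX x y + hY x y
  zero_mem' x y := by simp
  neg_mem' hX x y := by
    simp only [LinearMap.neg_apply, map_neg]
    linear_combination -hX x y

/-- The additive group of skew-hermitian endomorphisms that vanish on the submodule `W`. -/
def skewHermitianVanishing (B : V →ₛₗ[σ] V →ₗ[R] R) (W : Submodule R V) :
    AddSubgroup (Module.End R V) :=
  skewHermitian B ⊓ (W.compatibleMaps ⊥).toAddSubgroup

theorem mem_skewHermitianVanishing {B : V →ₛₗ[σ] V →ₗ[R] R} {W : Submodule R V}
    {X : Module.End R V} :
    X ∈ skewHermitianVanishing B W ↔ X ∈ skewHermitian B ∧ ∀ x ∈ W, X x = 0 :=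
  Iff.rfl

/-- The rank-two endomorphism `x ↦ ⟨p, x⟩ q - ⟨q, x⟩ p`, the element `p ∧ q` of the unitary Lie
algebra. -/
def hermitianWedge (B : V →ₛₗ[σ] V →ₗ[R] R) (p q : V) : Module.End R V :=
  (B p).smulRight q - (B q).smulRight p

theorem hermitianWedge_apply (B : V →ₛₗ[σ] V →ₗ[R] R) (p q x : V) :
    hermitianWedge B p q x = B p x • q - B q x • p :=
  rfl

theorem hermitianWedge_mem_skewHermitian {B : V →ₛₗ[σ] V →ₗ[R] R} (hB : B.IsSymm) (p q : V) :
    hermitianWedge B p q ∈ skewHermitian B := by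
  intro x y
  simp only [hermitianWedge_apply, map_sub, LinearMap.sub_apply,
    LinearMap.map_smulₛₗ₂, map_smul, smul_eq_mul, hB.eq]
  ring

theorem exists_hermitianWedge_apply_eq {B : V →ₛₗ[σ] V →ₗ[R] R} (hB : B.IsSymm)
    (h2 : IsUnit (2 : R)) {u v w : V} (huw : IsUnit (B u w)) (hvw : B v w = -B w v) :
    ∃ p ∈ Submodule.span R {u, v}, hermitianWedge B p u w = v := by
  obtain ⟨c, hc⟩ := huw.exists_right_inv
  obtain ⟨d, hd⟩ := h2.exists_right_inv
  have hσd : σ d = d := by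
    have hσd2 : 2 * σ d = 1 := by rw [← map_ofNat σ 2, ← map_mul, hd, map_one]
    linear_combination d * hσd2 - σ d * hd
  have hσσc : σ (σ c) = c := by
    have hσσuw : B u w * σ (σ c) = 1 := by
      rw [← hB.eq w u, ← hB.eq u w, ← map_mul, ← map_mul, hc, map_one, map_one]
    linear_combination c * hσσuw - σ (σ c) * hc
  have hσv : σ (B v w) = -B v w := by rw [hB.eq, hvw, neg_neg]
  -- The coefficient of `v` is forced; that of `u`, say `b`, solves `σ b - b = c * σ c * B v w`.
  refine ⟨-(d * c * σ c * B v w) • u - c • v, Submodule.sub_mem _ (Submodule.smul_mem _ _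
    (Submodule.mem_span_of_mem (by simp))) (Submodule.smul_mem _ _
    (Submodule.mem_span_of_mem (by simp))), ?_⟩
  simp only [hermitianWedge_apply, map_sub, LinearMap.sub_apply, LinearMap.map_smulₛₗ₂, map_neg,
    map_mul, hσd, hσσc, hσv, smul_eq_mul]
  match_scalars
  · linear_combination σ c * B v w * (2 * d * hc + hd)
  · linear_combination hc

variable (R) in
/-- The submodule spanned by `w₀, …, wₙ₋₁`. -/
def initialSpan (w : ℕ → V) (n : ℕ) : Submodule R V :=
  Submodule.span R (w '' Set.Iio n)

theorem mem_initialSpan {w : ℕ → V} {i n : ℕ} (hi : i < n) : w i ∈ initialSpan R w n :=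
  Submodule.mem_span_of_mem (Set.mem_image_of_mem w hi)

theorem initialSpan_le_iff {w : ℕ → V} {n : ℕ} {W : Submodule R V} :
    initialSpan R w n ≤ W ↔ ∀ i < n, w i ∈ W := by
  simp [initialSpan, Submodule.span_le, Set.subset_def]

theorem initialSpan_mono (w : ℕ → V) : Monotone (initialSpan R w) := fun _ _ hmn =>
  initialSpan_le_iff.mpr fun _ hi => mem_initialSpan (hi.trans_le hmn)

variable (R) in
/-- The `j`-th step, spanned by `uₖ, uₖ₊₂, …, uₖ₊₂ⱼ₋₂`, of the flag of every other vector of `u`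
from index `k` on. -/
def alternateFlag (u : ℕ → V) (k j : ℕ) : Submodule R V :=
  initialSpan R (fun i => u (k + 2 * i)) j

theorem alternateFlag_zero (u : ℕ → V) (k : ℕ) : alternateFlag R u k 0 = ⊥ := by
  simp [alternateFlag, initialSpan]

theorem alternateFlag_succ (u : ℕ → V) (k j : ℕ) :
    alternateFlag R u k (j + 1) = Submodule.span R {u k} ⊔ alternateFlag R u (k + 2) j := by
  have hmem {k i j : ℕ} (hi : i < j) : u (k + 2 * i) ∈ alternateFlag R u k j :=
    mem_initialSpan (w := fun i => u (k + 2 * i)) hi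
  have hshift (i : ℕ) : k + 2 * (i + 1) = k + 2 + 2 * i := by ring
  apply le_antisymm
  · refine initialSpan_le_iff.mpr fun i hi => ?_
    cases i with
    | zero => exact Submodule.mem_sup_left (Submodule.mem_span_singleton_self _)
    | succ i =>
      rw [hshift]
      exact Submodule.mem_sup_right (hmem (Nat.lt_of_succ_lt_succ hi))
  · refine sup_le ?_ (initialSpan_le_iff.mpr fun i hi => ?_)
    · rw [Submodule.span_singleton_le_iff_mem]
      exact hmem j.succ_pos
    · rw [← hshift]
      exact hmem (Nat.succ_lt_succ hi)

theorem span_image_Icc_one_eq_alternateFlag {f u : ℕ → V} {k : ℕ}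
    (hf : ∀ i, f (i + 1) = u (k + 2 * i)) (j : ℕ) :
    Submodule.span R (f '' Set.Icc 1 j) = alternateFlag R u k j := by
  have hIcc : Set.Icc 1 j = (· + 1) '' Set.Iio j := by
    ext i
    exact ⟨fun hi => ⟨i - 1, by grind⟩, by grind⟩
  simp only [hIcc, Set.image_image, hf, alternateFlag, initialSpan]

/-- The skew-hermitian endomorphisms that vanish on `w₀, …, wₖ₋₁` and stabilize the flag spanned by
those of `uₖ, uₖ₊₂, …` whose index is less than `l`. -/
def alternateParabolic (B : V →ₛₗ[σ] V →ₗ[R] R) (w u : ℕ → V) (l k : ℕ) :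
    AddSubgroup (Module.End R V) :=
  skewHermitianVanishing B (initialSpan R w k) ⊓ ⨅ (j : ℕ) (_ : k + 2 * j ≤ l + 1),
    ((alternateFlag R u k j).compatibleMaps (alternateFlag R u k j)).toAddSubgroup

theorem mem_alternateParabolic {B : V →ₛₗ[σ] V →ₗ[R] R} {w u : ℕ → V} {l k : ℕ}
    {X : Module.End R V} :
    X ∈ alternateParabolic B w u l k ↔ X ∈ skewHermitianVanishing B (initialSpan R w k) ∧
      ∀ j, k + 2 * j ≤ l + 1 → ∀ x ∈ alternateFlag R u k j, X x ∈ alternateFlag R u k j := by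
  simp only [alternateParabolic, AddSubgroup.mem_inf, AddSubgroup.mem_iInf]
  rfl

/-- The vectors `u₀, …, uₗ₋₁` are isotropic, and triangular with respect to `w`: each `uₘ` lies in
the span of `w₀, …, wₘ₊₁`, is orthogonal to `w₀, …, wₘ₋₁`, and pairs with `wₘ` to a unit. -/
structure IsIsotropicLadder (B : V →ₛₗ[σ] V →ₗ[R] R) (w u : ℕ → V) (l : ℕ) : Prop where
  mem_initialSpan_add_two : ∀ m < l, u m ∈ initialSpan R w (m + 2)
  orthogonal : ∀ m < l, ∀ i < m, B (u m) (w i) = 0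
  isotropic : ∀ m < l, B (u m) (u m) = 0
  isUnit : ∀ m < l, IsUnit (B (u m) (w m))

namespace IsIsotropicLadder

variable {B : V →ₛₗ[σ] V →ₗ[R] R} {w u : ℕ → V} {l k : ℕ}

theorem apply_eq_zero_of_mem_initialSpan (hu : IsIsotropicLadder B w u l) (hk : k < l) {x : V}
    (hx : x ∈ initialSpan R w k) : B (u k) x = 0 :=
  initialSpan_le_iff (W := (B (u k)).ker).mpr (hu.orthogonal k hk) hx

theorem apply_eq_zero_of_mem_alternateFlag (hu : IsIsotropicLadder B w u l) (hB : B.IsSymm)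
    {j : ℕ} (hj : k + 2 * j ≤ l + 1) {x : V} (hx : x ∈ alternateFlag R u k j) :
    B (u k) x = 0 := by
  refine initialSpan_le_iff (W := (B (u k)).ker).mpr (fun i hi => ?_) hx
  rw [LinearMap.mem_ker]
  obtain rfl | hi0 := i.eq_zero_or_pos
  · exact hu.isotropic k (by omega)
  · have huk : u k ∈ initialSpan R w (k + 2 * i) :=
      initialSpan_mono w (by omega) (hu.mem_initialSpan_add_two k (by omega))
    rw [← hB.eq, hu.apply_eq_zero_of_mem_initialSpan (by omega) huk, map_zero]

theorem hermitianWedge_mem_alternateParabolic (hu : IsIsotropicLadder B w u l) (hB : B.IsSymm)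
    (hk : k < l) {p : V} (hp : ∀ x ∈ initialSpan R w k, B p x = 0) :
    hermitianWedge B p (u k) ∈ alternateParabolic B w u l k := by
  refine mem_alternateParabolic.mpr
    ⟨⟨hermitianWedge_mem_skewHermitian hB p (u k), fun x hx => ?_⟩, fun j hj x hx => ?_⟩
  · simp [hermitianWedge_apply, hp x hx, hu.apply_eq_zero_of_mem_initialSpan hk hx]
  · rw [hermitianWedge_apply, hu.apply_eq_zero_of_mem_alternateFlag hB hj hx, zero_smul, sub_zero]
    cases j with
    | zero => simp_all [alternateFlag_zero]
    | succ j =>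
      rw [alternateFlag_succ]
      exact Submodule.mem_sup_left
        (Submodule.smul_mem _ _ (Submodule.mem_span_singleton_self _))

theorem exists_hermitianWedge_mem_alternateParabolic (hu : IsIsotropicLadder B w u l)
    (hB : B.IsSymm) (h2 : IsUnit (2 : R)) (hk : k < l) {X : Module.End R V}
    (hX : X ∈ skewHermitianVanishing B (initialSpan R w k)) :
    ∃ p, hermitianWedge B p (u k) ∈ alternateParabolic B w u l k ∧
      hermitianWedge B p (u k) (w k) = X (w k) := by
  obtain ⟨p, hp, hpX⟩ := exists_hermitianWedge_apply_eq hB h2 (hu.isUnit k hk)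
    (eq_neg_of_add_eq_zero_left (hX.1 (w k) (w k)))
  refine ⟨p, hu.hermitianWedge_mem_alternateParabolic hB hk fun x hx => ?_, hpX⟩
  obtain ⟨a, b, rfl⟩ := Submodule.mem_span_pair.mp hp
  have hXx : B (X (w k)) x = 0 := by
    simpa [(mem_skewHermitianVanishing.mp hX).2 x hx] using hX.1 (w k) x
  simp [hXx, hu.apply_eq_zero_of_mem_initialSpan hk hx]

theorem skewHermitianVanishing_le_sup (hu : IsIsotropicLadder B w u l) (hB : B.IsSymm)
    (h2 : IsUnit (2 : R)) (hk : k < l) :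
    skewHermitianVanishing B (initialSpan R w k) ≤
      alternateParabolic B w u l k ⊔ skewHermitianVanishing B (initialSpan R w (k + 1)) := by
  intro X hX
  obtain ⟨p, hT, hTX⟩ := hu.exists_hermitianWedge_mem_alternateParabolic hB h2 hk hX
  set T := hermitianWedge B p (u k)
  have hXT : X - T ∈ skewHermitianVanishing B (initialSpan R w k) :=
    sub_mem hX (mem_alternateParabolic.mp hT).1
  refine AddSubgroup.mem_sup.mpr ⟨T, hT, X - T, ⟨hXT.1, ?_⟩, add_sub_cancel T X⟩
  refine initialSpan_le_iff.mpr fun i hi => ?_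
  obtain hi | rfl := Nat.lt_succ_iff_lt_or_eq.mp hi
  · exact hXT.2 (mem_initialSpan hi)
  · simp [hTX]

theorem alternateParabolic_add_two_le (hu : IsIsotropicLadder B w u l) :
    alternateParabolic B w u l (k + 2) ≤ alternateParabolic B w u l k := by
  intro X hX
  obtain ⟨⟨hXskew, hXw⟩, hXflag⟩ := mem_alternateParabolic.mp hX
  refine mem_alternateParabolic.mpr
    ⟨⟨hXskew, (initialSpan_mono w (by omega)).trans hXw⟩, fun j hj x hx => ?_⟩
  cases j with
  | zero => simp_all [alternateFlag_zero]
  | succ j =>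
    rw [alternateFlag_succ] at hx ⊢
    obtain ⟨y, hy, z, hz, rfl⟩ := Submodule.mem_sup.mp hx
    obtain ⟨a, rfl⟩ := Submodule.mem_span_singleton.mp hy
    have hXu : X (u k) = 0 := hXw (hu.mem_initialSpan_add_two k (by omega))
    rw [map_add, map_smul, hXu, smul_zero, zero_add]
    exact Submodule.mem_sup_right (hXflag j (by omega) z hz)

theorem skewHermitianVanishing_le_alternateParabolic_sup (hu : IsIsotropicLadder B w u l)
    (hB : B.IsSymm) (h2 : IsUnit (2 : R)) (hk : k ≤ l) :
    skewHermitianVanishing B (initialSpan R w k) ≤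
      alternateParabolic B w u l k ⊔ alternateParabolic B w u l (k + 1) := by
  induction hk using Nat.decreasingInduction with
  | self =>
    refine le_sup_of_le_left fun X hX => mem_alternateParabolic.mpr ⟨hX, fun j hj x hx => ?_⟩
    obtain rfl : j = 0 := by omega
    simp_all [alternateFlag_zero]
  | of_succ k hk ih =>
    calc skewHermitianVanishing B (initialSpan R w k)
      _ ≤ alternateParabolic B w u l k ⊔ skewHermitianVanishing B (initialSpan R w (k + 1)) :=
        hu.skewHermitianVanishing_le_sup hB h2 hk
      _ ≤ alternateParabolic B w u l k ⊔
          (alternateParabolic B w u l (k + 1) ⊔ alternateParabolic B w u l (k + 2)) :=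
        sup_le_sup_left ih _
      _ ≤ alternateParabolic B w u l k ⊔ alternateParabolic B w u l (k + 1) :=
        sup_le le_sup_left (sup_le le_sup_right
          (hu.alternateParabolic_add_two_le.trans le_sup_left))

theorem skewHermitian_eq_sup (hu : IsIsotropicLadder B w u l) (hB : B.IsSymm)
    (h2 : IsUnit (2 : R)) :
    skewHermitian B = alternateParabolic B w u l 0 ⊔ alternateParabolic B w u l 1 := by
  have hle (k : ℕ) : alternateParabolic B w u l k ≤ skewHermitian B := fun _ hX =>
    (mem_alternateParabolic.mp hX).1.1
  refine le_antisymm (fun X hX => ?_) (sup_le (hle 0) (hle 1))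
  exact hu.skewHermitianVanishing_le_alternateParabolic_sup hB h2 l.zero_le
    ⟨hX, initialSpan_le_iff.mpr (by simp)⟩

end IsIsotropicLadder

variable (R) in
/-- The vectors `wₘ - (-1)ᵐ wₘ₊₁`: those of even index `2i - 2` are the `u₋ᵢ`, those of odd index
`2i - 1` are the `u'ᵢ`. -/
def alternatingPair (w : ℕ → V) (m : ℕ) : V :=
  w m - (-1 : R) ^ m • w (m + 1)

theorem isIsotropicLadder_alternatingPair {B : V →ₛₗ[σ] V →ₗ[R] R} {w : ℕ → V} {l : ℕ} {ν : R}
    (hν : IsUnit ν) (horth : ∀ i ≤ l, ∀ j ≤ l, i ≠ j → B (w i) (w j) = 0)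
    (hself : ∀ i ≤ l, B (w i) (w i) = (-1) ^ i * ν) :
    IsIsotropicLadder B w (alternatingPair R w) l := by
  have hleft (m : ℕ) (y : V) :
      B (alternatingPair R w m) y = B (w m) y - (-1) ^ m * B (w (m + 1)) y := by
    simp [alternatingPair]
  refine ⟨fun m _ => ?_, fun m hm i hi => ?_, fun m hm => ?_, fun m hm => ?_⟩
  · exact sub_mem (mem_initialSpan (by omega))
      (Submodule.smul_mem _ _ (mem_initialSpan (by omega)))
  · rw [hleft, horth m hm.le i (by omega) (by omega), horth (m + 1) hm i (by omega) (by omega),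
      mul_zero, sub_zero]
  · have hsq : ((-1 : R) ^ m) * (-1) ^ m = 1 := by rw [← mul_pow]; simp
    rw [hleft]
    simp only [alternatingPair, map_sub, map_smul, smul_eq_mul,
      horth m hm.le (m + 1) hm (by omega), horth (m + 1) hm m hm.le (by omega),
      hself m hm.le, hself (m + 1) hm, pow_succ]
    linear_combination -((-1) ^ m * ν) * hsq
  · rw [hleft, horth (m + 1) hm m hm.le (by omega), hself m hm.le, mul_zero, sub_zero]
    exact (isUnit_one.neg.pow m).mul hν

theorem alternatingPair_zero_add_two_mul (w : ℕ → V) (i : ℕ) :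
    alternatingPair R w (0 + 2 * i) = w (2 * (i + 1) - 2) - w (2 * (i + 1) - 1) := by
  simp [alternatingPair, show 2 * (i + 1) - 2 = 2 * i by omega,
    show 2 * (i + 1) - 1 = 2 * i + 1 by omega]

theorem alternatingPair_one_add_two_mul (w : ℕ → V) (i : ℕ) :
    alternatingPair R w (1 + 2 * i) = w (2 * (i + 1) - 1) + w (2 * (i + 1)) := by
  simp [alternatingPair, pow_add, show 2 * (i + 1) = 1 + 2 * i + 1 by omega]

/-- A hermitian form given as a function linear in the first variable, as a sesquilinear map; the
variables are swapped, so that it is semilinear in the first variable. -/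
def sesquilinearOfHermitian (h : V → V → R) (haddl : ∀ u u' v, h (u + u') v = h u v + h u' v)
    (hsmull : ∀ (a : R) u v, h (a • u) v = a * h u v) (hconj : ∀ u v, h v u = σ (h u v)) :
    V →ₛₗ[σ] V →ₗ[R] R :=
  LinearMap.mk₂'ₛₗ σ (RingHom.id R) (fun u v => h v u)
    (fun u u' v => by rw [hconj (u + u') v, haddl, map_add, ← hconj, ← hconj])
    (fun a u v => by rw [hconj (a • u) v, hsmull, map_mul, ← hconj, smul_eq_mul])
    (fun u v v' => haddl v v' u) (fun a u v => hsmull a v u)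

end Hermitian

theorem stmt_8_general {R V : Type*} [CommRing R] [AddCommGroup V] [Module R V]
    (h2 : IsUnit (2 : R)) (σ : R →+* R) (h : V → V → R)
    (haddl : ∀ u u' v : V, h (u + u') v = h u v + h u' v)
    (hsmull : ∀ (a : R) (u v : V), h (a • u) v = a * h u v)
    (hconj : ∀ u v : V, h v u = σ (h u v))
    {ν : R} (hν : IsUnit ν) (l : ℕ) (w : ℕ → V)
    (horth : ∀ i ≤ l, ∀ j ≤ l, i ≠ j → h (w i) (w j) = 0)
    (hvalw : ∀ i ≤ l, h (w i) (w i) = (-1 : R) ^ i * ν) :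
    ∀ X : V → V, IsLinearMap R X → (∀ u v : V, h (X u) v + h u (X v) = 0) →
      ∃ Y Z : V → V,
        IsLinearMap R Y ∧ (∀ u v : V, h (Y u) v + h u (Y v) = 0) ∧
        (∀ j : ℕ, 1 ≤ j → j ≤ (l + 1) / 2 →
          ∀ x ∈ Submodule.span R ((fun i : ℕ => w (2 * i - 2) - w (2 * i - 1)) '' Set.Icc 1 j),
            Y x ∈ Submodule.span R
              ((fun i : ℕ => w (2 * i - 2) - w (2 * i - 1)) '' Set.Icc 1 j)) ∧
        IsLinearMap R Z ∧ (∀ u v : V, h (Z u) v + h u (Z v) = 0) ∧ Z (w 0) = 0 ∧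
        (∀ j : ℕ, 1 ≤ j → j ≤ l / 2 →
          ∀ x ∈ Submodule.span R ((fun i : ℕ => w (2 * i - 1) + w (2 * i)) '' Set.Icc 1 j),
            Z x ∈ Submodule.span R
              ((fun i : ℕ => w (2 * i - 1) + w (2 * i)) '' Set.Icc 1 j)) ∧
        X = Y + Z := by
  intro X hXlin hX
  let B := sesquilinearOfHermitian h haddl hsmull hconj
  have hB : B.IsSymm := ⟨fun u v => (hconj v u).symm⟩
  have hskew (Y : Module.End R V) :
      Y ∈ skewHermitian B ↔ ∀ u v, h (Y u) v + h u (Y v) = 0 := by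
    refine forall_comm.trans (forall₂_congr fun u v => ?_)
    rw [add_comm]
    rfl
  have hladder : IsIsotropicLadder B w (alternatingPair R w) l :=
    isIsotropicLadder_alternatingPair hν (fun i hi j hj hij => horth j hj i hi hij.symm) hvalw
  have hXB : hXlin.mk' X ∈ skewHermitian B := (hskew _).mpr hX
  rw [hladder.skewHermitian_eq_sup hB h2] at hXB
  obtain ⟨Y, hY, Z, hZ, hYZ⟩ := AddSubgroup.mem_sup.mp hXB
  obtain ⟨⟨hYskew, -⟩, hYflag⟩ := mem_alternateParabolic.mp hY
  obtain ⟨⟨hZskew, hZw⟩, hZflag⟩ := mem_alternateParabolic.mp hZ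
  refine ⟨Y, Z, Y.isLinear, (hskew Y).mp hYskew, fun j _ hj => ?_, Z.isLinear,
    (hskew Z).mp hZskew, hZw (mem_initialSpan one_pos), fun j _ hj => ?_, ?_⟩
  · rw [span_image_Icc_one_eq_alternateFlag fun i =>
      (alternatingPair_zero_add_two_mul (R := R) w i).symm]
    exact hYflag j (by omega)
  · rw [span_image_Icc_one_eq_alternateFlag fun i =>
      (alternatingPair_one_add_two_mul (R := R) w i).symm]
    exact hZflag j (by omega)
  · exact congrArg DFunLike.coe hYZ.symm

/-- `𝔭̄₀ + 𝔭_H = 𝔤₀`: every skew-hermitian endomorphism of `V₀` is the sum of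
a skew-hermitian endomorphism preserving the flag of the spaces `Eu₋₁ ⊕ … ⊕ Eu₋ⱼ`
(`u₋ᵢ = w_{2i−2} − w_{2i−1}`) and a skew-hermitian endomorphism killing `w₀` and
preserving the flag of the spaces `Eu'₁ ⊕ … ⊕ Eu'ⱼ` (`u'ᵢ = w_{2i−1} + w_{2i}`). -/
theorem stmt_8 (F E : Type*) [Field F] [CharZero F] [Field E] [Algebra F E]
    (hquad : Module.finrank F E = 2)
    (σ : E ≃ₐ[F] E) (hσnt : ∃ x : E, σ x ≠ x)
    (V₀ : Type*) [AddCommGroup V₀] [Module E V₀] [FiniteDimensional E V₀]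
    (h : V₀ → V₀ → E)
    (haddl : ∀ u u' v : V₀, h (u + u') v = h u v + h u' v)
    (hsmull : ∀ (a : E) (u v : V₀), h (a • u) v = a * h u v)
    (hconj : ∀ u v : V₀, h v u = σ (h u v))
    (hnd : ∀ u : V₀, (∀ v : V₀, h u v = 0) → u = 0)
    (ν₀ : F) (hν0 : ν₀ ≠ 0)
    (l : ℕ) (w : ℕ → V₀)
    (horth : ∀ i ≤ l, ∀ j ≤ l, i ≠ j → h (w i) (w j) = 0)
    (hvalw : ∀ i ≤ l, h (w i) (w i) = (-1 : E) ^ i * algebraMap F E ν₀) :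
    ∀ X : V₀ → V₀, IsLinearMap E X → (∀ u v : V₀, h (X u) v + h u (X v) = 0) →
      ∃ Y Z : V₀ → V₀,
        IsLinearMap E Y ∧ (∀ u v : V₀, h (Y u) v + h u (Y v) = 0) ∧
        (∀ j : ℕ, 1 ≤ j → j ≤ (l + 1) / 2 →
          ∀ x ∈ Submodule.span E ((fun i : ℕ => w (2 * i - 2) - w (2 * i - 1)) '' Set.Icc 1 j),
            Y x ∈ Submodule.span E
              ((fun i : ℕ => w (2 * i - 2) - w (2 * i - 1)) '' Set.Icc 1 j)) ∧
        IsLinearMap E Z ∧ (∀ u v : V₀, h (Z u) v + h u (Z v) = 0) ∧ Z (w 0) = 0 ∧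
        (∀ j : ℕ, 1 ≤ j → j ≤ l / 2 →
          ∀ x ∈ Submodule.span E ((fun i : ℕ => w (2 * i - 1) + w (2 * i)) '' Set.Icc 1 j),
            Z x ∈ Submodule.span E
              ((fun i : ℕ => w (2 * i - 1) + w (2 * i)) '' Set.Icc 1 j)) ∧
        X = Y + Z := by
  have : CharZero E := charZero_of_injective_algebraMap (algebraMap F E).injective
  exact stmt_8_general (IsUnit.mk0 2 two_ne_zero) σ h haddl hsmull hconj
    ((IsUnit.mk0 ν₀ hν0).map (algebraMap F E)) l w horth hvalw
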